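/- The star graph S_3 has growth rate γ(S_3) = 2 + 1/√5. -/

import Mathlib

open MeasureTheory Filter Topology
open scoped ENNReal Classical

/-- The ballistic deposition height process on a graph `G`, started from `h0`,
driven by the sequence of chosen vertices `X`. -/
noncomputable def heightProcess {V : Type*} [Fintype V] (G : SimpleGraph V)
    (h0 : V → ℕ) (X : ℕ → V) : ℕ → V → ℕ
  | 0 => h0
  | n + 1 => fun x =>
      if x = X n then
        1 + Finset.univ.sup (fun y =>
          if y = x ∨ G.Adj x y then heightProcess G h0 X n y else 0)
      else heightProcess G h0 X n x

/-- `X` is an i.i.d. sequence of uniformly distributed `V`-valued random variables on `(Ω, μ)`: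
every finite cylinder event has the product-of-uniform probabilities. -/
def IsUniformIID {V : Type*} [Fintype V] {Ω : Type*} [MeasurableSpace Ω]
    (μ : Measure Ω) (X : ℕ → Ω → V) : Prop :=
  (∀ (n : ℕ) (v : V), MeasurableSet {ω | X n ω = v}) ∧
  (∀ (n : ℕ) (f : ℕ → V), μ {ω | ∀ k < n, X k ω = f k} = (Fintype.card V : ℝ≥0∞)⁻¹ ^ n)

/-- `γ` is the growth rate of `G`: `γ > 0` and, for any i.i.d. uniform driving sequence,
almost surely `(#V/n) · max_x H_{x,n} → γ` and `(#V/n) · min_x H_{x,n} → γ`. -/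
def IsGrowthRate {V : Type*} [Fintype V] (G : SimpleGraph V) (γ : ℝ) : Prop :=
  0 < γ ∧
  ∀ {Ω : Type} [MeasurableSpace Ω] (μ : Measure Ω) [IsProbabilityMeasure μ]
    (X : ℕ → Ω → V), IsUniformIID μ X →
    (∀ᵐ ω ∂μ, Tendsto (fun n : ℕ =>
        (Fintype.card V : ℝ) *
          (⨆ x : V, (heightProcess G (fun _ => 0) (fun k => X k ω) n x : ℝ)) / n)
      atTop (𝓝 γ)) ∧
    (∀ᵐ ω ∂μ, Tendsto (fun n : ℕ =>
        (Fintype.card V : ℝ) *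
          (⨅ x : V, (heightProcess G (fun _ => 0) (fun k => X k ω) n x : ℝ)) / n)
      atTop (𝓝 γ))


/-- The star graph `S n` on `n` vertices `0, 1, …, n−1`, with edges `{0, i}` for `1 ≤ i ≤ n−1`. -/
def starGraph (n : ℕ) : SimpleGraph (Fin n) :=
  SimpleGraph.fromRel fun i _ => (i : ℕ) = 0


/-
A solution `φ` of the Poisson equation `𝔼 v, φ (deposit G v h) = φ h + θ` makes `φ (H n) - n * θ`
a martingale; bounded increments give it a second moment of order `n`, so it is `o(n)` almost surely
along the squares. A Lyapunov function keeps every height within bounded mean distance of `φ`, and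
monotonicity of the heights fills the gaps between consecutive squares.

On the star with three vertices one can take `φ = max height + p d`, where `d` is the difference
between the heights of the two leaves, each cut off below at the centre. For `d ≥ 1` the equation
becomes `p 0 + p (d - 1) + p (d + 1) - 3 * p d = 3 * θ - 2`; with `3 * θ - 2 = p 0` its bounded
solutions are the multiples of `ψ ^ (2 * d)`, as `ψ ^ 2 = (3 - √5) / 2` is the root of
`t ^ 2 - 3 * t + 1` in `(0, 1)`. The equation at `d = 0` forces `p 0 = 1 / √5`.
-/

open scoped BigOperators

section Analysis

lemma tendsto_div_of_monotone_of_tendsto_div_sq {u : ℕ → ℝ} {l : ℝ} (hmono : Monotone u)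
    (hlim : Tendsto (fun k : ℕ ↦ u (k ^ 2) / (k : ℝ) ^ 2) atTop (𝓝 l)) :
    Tendsto (fun n : ℕ ↦ u n / n) atTop (𝓝 l) := by
  refine tendsto_div_of_monotone_of_exists_subseq_tendsto_div u l hmono fun a ha ↦
    ⟨fun k ↦ k ^ 2, ?_, tendsto_pow_atTop two_ne_zero, by simpa only [Nat.cast_pow] using hlim⟩
  have hratio : Tendsto (fun k : ℕ ↦ (1 + 1 / (k : ℝ)) ^ 2) atTop (𝓝 1) := by
    simpa using ((tendsto_one_div_atTop_nhds_zero_nat (𝕜 := ℝ)).const_add 1).pow 2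
  filter_upwards [hratio.eventually_lt_const ha, eventually_gt_atTop 0] with k hk hpos
  have hk0 : (k : ℝ) ≠ 0 := by positivity
  calc (((k + 1) ^ 2 : ℕ) : ℝ) = (1 + 1 / (k : ℝ)) ^ 2 * (k : ℝ) ^ 2 := by
        push_cast; field_simp
    _ ≤ a * ((k ^ 2 : ℕ) : ℝ) := by push_cast; gcongr

variable {Ω : Type*} [MeasurableSpace Ω] {μ : Measure Ω}

lemma ae_tendsto_zero_of_summable_integral_norm {E : Type*} [NormedAddCommGroup E]
    {f : ℕ → Ω → E} (hf : ∀ n, Integrable (f n) μ)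
    (hsum : Summable fun n ↦ ∫ ω, ‖f n ω‖ ∂μ) :
    ∀ᵐ ω ∂μ, Tendsto (fun n ↦ f n ω) atTop (𝓝 0) := by
  have hnorm : ∑' n, eLpNorm (f n) 1 μ ≠ ∞ := by
    simp only [eLpNorm_one_eq_lintegral_enorm, ← ofReal_integral_norm_eq_lintegral_enorm (hf _)]
    exact hsum.tsum_ofReal_ne_top
  filter_upwards [summable_norm_of_tsum_eLpNorm_ne_top le_rfl (fun n ↦ (hf n).1) hnorm] with ω hω
  exact tendsto_zero_iff_norm_tendsto_zero.2 hω.tendsto_atTop_zero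

lemma ae_tendsto_div_sq_of_integral_le {W : ℕ → Ω → ℝ} {C : ℝ} (hW : ∀ n, Integrable (W n) μ)
    (hnonneg : ∀ n ω, 0 ≤ W n ω) (hC : ∀ n, ∫ ω, W n ω ∂μ ≤ C) :
    ∀ᵐ ω ∂μ, Tendsto (fun k : ℕ ↦ W (k ^ 2) ω / (k : ℝ) ^ 2) atTop (𝓝 0) := by
  refine ae_tendsto_zero_of_summable_integral_norm (fun k ↦ (hW _).div_const _) ?_
  refine .of_nonneg_of_le (fun k ↦ integral_nonneg fun ω ↦ norm_nonneg _) (fun k ↦ ?_)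
    ((Real.summable_one_div_nat_pow.2 one_lt_two).mul_left C)
  calc ∫ ω, ‖W (k ^ 2) ω / (k : ℝ) ^ 2‖ ∂μ = (∫ ω, W (k ^ 2) ω ∂μ) / (k : ℝ) ^ 2 := by
        rw [← integral_div]
        exact integral_congr_ae (.of_forall fun ω ↦
          Real.norm_of_nonneg (div_nonneg (hnonneg _ ω) (sq_nonneg _)))
    _ ≤ C * (1 / (k : ℝ) ^ 2) := by rw [mul_one_div]; gcongr; exact hC _

lemma integral_comp_eq_expect [IsFiniteMeasure μ] {α : Type*} [Fintype α] {Y : Ω → α}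
    (hY : ∀ a, MeasurableSet (Y ⁻¹' {a})) (hunif : ∀ a, μ (Y ⁻¹' {a}) = (Fintype.card α : ℝ≥0∞)⁻¹)
    (f : α → ℝ) : ∫ ω, f (Y ω) ∂μ = 𝔼 a, f a := by
  let _ : MeasurableSpace α := ⊤
  have hYm : Measurable Y := measurable_to_countable' hY
  have hfibre (a : α) : (μ.map Y).real {a} = (Fintype.card α : ℝ)⁻¹ := by
    rw [map_measureReal_apply hYm (measurableSet_singleton a), measureReal_def, hunif]
    simp
  rw [← integral_map hYm.aemeasurable (.of_discrete), integral_fintype .of_finite,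
    Fintype.expect_eq_sum_div_card, Finset.sum_div]
  simp only [hfibre, smul_eq_mul, inv_mul_eq_div]

lemma tendsto_iSup_div_of_forall_tendsto_div {ι : Type*} [Finite ι] [Nonempty ι]
    {u : ℕ → ι → ℝ} {l : ℝ} (hu : ∀ i, Tendsto (fun n : ℕ ↦ u n i / n) atTop (𝓝 l)) :
    Tendsto (fun n : ℕ ↦ (⨆ i, u n i) / n) atTop (𝓝 l) := by
  have := Fintype.ofFinite ι
  have hsup := Tendsto.finset_sup'_nhds_apply Finset.univ_nonempty fun i _ ↦ hu i
  simpa only [Finset.sup'_const, Finset.sup'_univ_eq_ciSup, div_eq_mul_inv,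
    ← Real.iSup_mul_of_nonneg (inv_nonneg.2 (Nat.cast_nonneg _))] using hsup

lemma tendsto_iInf_div_of_forall_tendsto_div {ι : Type*} [Finite ι] [Nonempty ι]
    {u : ℕ → ι → ℝ} {l : ℝ} (hu : ∀ i, Tendsto (fun n : ℕ ↦ u n i / n) atTop (𝓝 l)) :
    Tendsto (fun n : ℕ ↦ (⨅ i, u n i) / n) atTop (𝓝 l) := by
  have := Fintype.ofFinite ι
  have hinf := Tendsto.finset_inf'_nhds_apply Finset.univ_nonempty fun i _ ↦ hu i
  simpa only [Finset.inf'_const, Finset.inf'_univ_eq_ciInf, div_eq_mul_inv,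
    ← Real.iInf_mul_of_nonneg (inv_nonneg.2 (Nat.cast_nonneg _))] using hinf

lemma expect_sq_add_sub_expect_le {ι : Type*} [Fintype ι] [Nonempty ι] (y : ℝ) (x : ι → ℝ) :
    𝔼 i, (y + (x i - 𝔼 j, x j)) ^ 2 ≤ y ^ 2 + 𝔼 i, x i ^ 2 := by
  set m := 𝔼 j, x j
  calc 𝔼 i, (y + (x i - m)) ^ 2 = 𝔼 i, (x i ^ 2 + 2 * (y - m) * x i + (y - m) ^ 2) :=
        Finset.expect_congr rfl fun i _ ↦ by ring
    _ = 𝔼 i, x i ^ 2 + 2 * (y - m) * m + (y - m) ^ 2 := by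
        rw [Finset.expect_add_distrib, Finset.expect_add_distrib, ← Finset.mul_expect,
          Fintype.expect_const]
    _ ≤ y ^ 2 + 𝔼 i, x i ^ 2 := by linarith [sq_nonneg m]

end Analysis

section Deposition

variable {V : Type*} [Fintype V] {G : SimpleGraph V} {h₀ : V → ℕ} {n : ℕ}

/-- The configuration obtained from `h` by dropping one block at `v`: one transition of the
deposition process. -/
noncomputable def deposit (G : SimpleGraph V) (v : V) (h : V → ℕ) : V → ℕ := fun x ↦
  if x = v then 1 + Finset.univ.sup (fun y ↦ if y = x ∨ G.Adj x y then h y else 0) else h x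

lemma heightProcess_succ (X : ℕ → V) :
    heightProcess G h₀ X (n + 1) = deposit G (X n) (heightProcess G h₀ X n) := rfl

lemma deposit_of_ne {v x : V} (hx : x ≠ v) (h : V → ℕ) : deposit G v h x = h x := if_neg hx

lemma le_deposit (v : V) (h : V → ℕ) : h ≤ deposit G v h := by
  intro x
  rw [deposit]
  split_ifs
  · refine le_trans ?_ (Nat.le_add_left _ 1)
    simpa using Finset.le_sup (f := fun y ↦ if y = x ∨ G.Adj x y then h y else 0)
      (Finset.mem_univ x)
  · exact le_rfl

lemma monotone_heightProcess (X : ℕ → V) : Monotone (heightProcess G h₀ X) :=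
  monotone_nat_of_le_succ fun _ ↦ le_deposit _ _

lemma dependsOn_heightProcess (n : ℕ) :
    DependsOn (fun X ↦ heightProcess G h₀ X n) (Set.Iio n) := by
  induction n with
  | zero => exact fun _ _ _ ↦ rfl
  | succ n ih =>
    intro X Y hXY
    have hprev : heightProcess G h₀ X n = heightProcess G h₀ Y n :=
      ih fun k hk ↦ hXY k (Set.mem_Iio.2 (Nat.lt_succ_of_lt hk))
    simp only [heightProcess_succ, hprev, hXY n (Set.mem_Iio.2 n.lt_succ_self)]

variable {Ω : Type*} [MeasurableSpace Ω] {μ : Measure Ω} {X : ℕ → Ω → V}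

namespace IsUniformIID

lemma measurable [MeasurableSpace V] (hX : IsUniformIID μ X) (n : ℕ) : Measurable (X n) :=
  measurable_to_countable' (hX.1 n)

lemma measurable_domRestrict [MeasurableSpace V] (hX : IsUniformIID μ X) (s : Set ℕ) :
    Measurable fun ω ↦ s.domRestrict (X · ω) :=
  measurable_pi_lambda _ fun k ↦ hX.measurable k

lemma measure_preimage_prodMk_domRestrict_Iio (hX : IsUniformIID μ X)
    (p : V × (Set.Iio n → V)) :
    μ ((fun ω ↦ (X n ω, (Set.Iio n).domRestrict (X · ω))) ⁻¹' {p}) =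
      (Fintype.card (V × (Set.Iio n → V)) : ℝ≥0∞)⁻¹ := by
  obtain ⟨v, w⟩ := p
  let f (k : ℕ) : V := if hk : k < n then w ⟨k, hk⟩ else v
  have hlast : f n = v := dif_neg (lt_irrefl n)
  have hprev (k : Set.Iio n) : f k = w k := dif_pos k.2
  have hcylinder : (fun ω ↦ (X n ω, (Set.Iio n).domRestrict (X · ω))) ⁻¹' {(v, w)} =
      {ω | ∀ k < n + 1, X k ω = f k} := by
    ext ω
    simp only [Set.mem_preimage, Set.mem_singleton_iff, Prod.mk.injEq, funext_iff,
      Set.domRestrict_apply, ← hprev, Subtype.forall, Set.mem_Iio, Set.mem_ofPred_eq,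
      Nat.forall_lt_succ_right, hlast, and_comm]
  rw [hcylinder, hX.2, ← ENNReal.inv_pow]
  simp [pow_succ']

variable [IsProbabilityMeasure μ]

lemma integrable_of_dependsOn (hX : IsUniformIID μ X) {F : (ℕ → V) → ℝ}
    (hF : DependsOn F (Set.Iio n)) : Integrable (fun ω ↦ F (X · ω)) μ := by
  let _ : MeasurableSpace V := ⊤
  obtain ⟨g, rfl⟩ := dependsOn_iff_exists_comp.1 hF
  have := Measure.isProbabilityMeasure_map (μ := μ)
    (hX.measurable_domRestrict (Set.Iio n)).aemeasurable
  exact (Integrable.of_finite (f := g)).comp_measurable (hX.measurable_domRestrict _)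

lemma integral_comp_prodMk_domRestrict_Iio (hX : IsUniformIID μ X)
    (f : V × (Set.Iio n → V) → ℝ) :
    ∫ ω, f (X n ω, (Set.Iio n).domRestrict (X · ω)) ∂μ = 𝔼 p, f p := by
  let _ : MeasurableSpace V := ⊤
  exact integral_comp_eq_expect
    (fun p ↦ (hX.measurable n).prodMk (hX.measurable_domRestrict _) (measurableSet_singleton p))
    hX.measure_preimage_prodMk_domRestrict_Iio f

lemma integral_apply_of_dependsOn {α : Type*} [Nonempty α] (hX : IsUniformIID μ X)
    {F : (ℕ → V) → α} (hF : DependsOn F (Set.Iio n)) (f : V → α → ℝ) :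
    ∫ ω, f (X n ω) (F (X · ω)) ∂μ = ∫ ω, 𝔼 v, f v (F (X · ω)) ∂μ := by
  have : Nonempty V := (nonempty_of_isProbabilityMeasure μ).map (X 0)
  obtain ⟨g, rfl⟩ := dependsOn_iff_exists_comp.1 hF
  calc ∫ ω, f (X n ω) (g ((Set.Iio n).domRestrict (X · ω))) ∂μ
      = 𝔼 p : V × (Set.Iio n → V), f p.1 (g p.2) :=
        hX.integral_comp_prodMk_domRestrict_Iio fun p ↦ f p.1 (g p.2)
    _ = 𝔼 p : V × (Set.Iio n → V), 𝔼 v, f v (g p.2) := by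
        simp only [← Finset.univ_product_univ, Finset.expect_product, Fintype.expect_const]
        exact Finset.expect_comm _ _ _
    _ = ∫ ω, 𝔼 v, f v (g ((Set.Iio n).domRestrict (X · ω))) ∂μ :=
        (hX.integral_comp_prodMk_domRestrict_Iio fun p ↦ 𝔼 v, f v (g p.2)).symm

lemma integrable_heightProcess (hX : IsUniformIID μ X) (f : (V → ℕ) → ℝ) (n : ℕ) :
    Integrable (fun ω ↦ f (heightProcess G h₀ (X · ω) n)) μ :=
  hX.integrable_of_dependsOn (F := fun Y ↦ f (heightProcess G h₀ Y n)) fun _ _ hXY ↦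
    congrArg f (dependsOn_heightProcess n hXY)

lemma integral_heightProcess_succ (hX : IsUniformIID μ X) (f : (V → ℕ) → ℝ) (n : ℕ) :
    ∫ ω, f (heightProcess G h₀ (X · ω) (n + 1)) ∂μ =
      ∫ ω, 𝔼 v, f (deposit G v (heightProcess G h₀ (X · ω) n)) ∂μ :=
  hX.integral_apply_of_dependsOn (dependsOn_heightProcess n) fun v h ↦ f (deposit G v h)

lemma integral_heightProcess_le_of_drift (hX : IsUniformIID μ X) {f : ℕ → (V → ℕ) → ℝ}
    {a b : ℝ} {B : ℕ → ℝ} (ha : 0 ≤ a)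
    (hf : ∀ n h, 𝔼 v, f (n + 1) (deposit G v h) ≤ a * f n h + b)
    (hB₀ : f 0 h₀ ≤ B 0) (hB : ∀ n, a * B n + b ≤ B (n + 1)) (n : ℕ) :
    ∫ ω, f n (heightProcess G h₀ (X · ω) n) ∂μ ≤ B n := by
  induction n with
  | zero => simpa [heightProcess] using hB₀
  | succ n ih =>
    have hint := hX.integrable_heightProcess (G := G) (h₀ := h₀) (f n) n
    calc ∫ ω, f (n + 1) (heightProcess G h₀ (X · ω) (n + 1)) ∂μ
        = ∫ ω, 𝔼 v, f (n + 1) (deposit G v (heightProcess G h₀ (X · ω) n)) ∂μ :=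
          hX.integral_heightProcess_succ (f (n + 1)) n
      _ ≤ ∫ ω, (a * f n (heightProcess G h₀ (X · ω) n) + b) ∂μ :=
          integral_mono
            (hX.integrable_heightProcess (fun h ↦ 𝔼 v, f (n + 1) (deposit G v h)) n)
            ((hint.const_mul a).add (integrable_const b)) fun ω ↦ hf n _
      _ = a * ∫ ω, f n (heightProcess G h₀ (X · ω) n) ∂μ + b := by
          rw [integral_add (hint.const_mul a) (integrable_const b), integral_const_mul]
          simp
      _ ≤ a * B n + b := by gcongr
      _ ≤ B (n + 1) := hB n

end IsUniformIID

lemma expect_sq_deposit_le_of_poisson [Nonempty V] {φ : (V → ℕ) → ℝ} {θ K : ℝ} {h : V → ℕ}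
    (hφ : 𝔼 v, φ (deposit G v h) = φ h + θ) (hK : ∀ v, |φ (deposit G v h) - φ h| ≤ K) (c : ℝ) :
    𝔼 v, (φ (deposit G v h) - (c + θ)) ^ 2 ≤ (φ h - c) ^ 2 + K ^ 2 := by
  have hθ : 𝔼 v, (φ (deposit G v h) - φ h) = θ := by
    rw [Finset.expect_sub_distrib, hφ, Fintype.expect_const, add_sub_cancel_left]
  calc 𝔼 v, (φ (deposit G v h) - (c + θ)) ^ 2
      = 𝔼 v, ((φ h - c) + (φ (deposit G v h) - φ h - 𝔼 w, (φ (deposit G w h) - φ h))) ^ 2 :=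
        Finset.expect_congr rfl fun v _ ↦ by rw [hθ]; ring
    _ ≤ (φ h - c) ^ 2 + 𝔼 v, (φ (deposit G v h) - φ h) ^ 2 := expect_sq_add_sub_expect_le _ _
    _ ≤ (φ h - c) ^ 2 + K ^ 2 := by
        gcongr
        exact Finset.expect_le Finset.univ_nonempty fun v _ ↦
          sq_le_sq' (abs_le.1 (hK v)).1 (abs_le.1 (hK v)).2

namespace IsUniformIID

variable [IsProbabilityMeasure μ]

lemma integral_sq_heightProcess_le_of_poisson [Nonempty V] (hX : IsUniformIID μ X)
    {φ : (V → ℕ) → ℝ} {θ K : ℝ} (hφ : ∀ h, 𝔼 v, φ (deposit G v h) = φ h + θ)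
    (hK : ∀ v h, |φ (deposit G v h) - φ h| ≤ K) (n : ℕ) :
    ∫ ω, (φ (heightProcess G h₀ (X · ω) n) - (φ h₀ + n * θ)) ^ 2 ∂μ ≤ K ^ 2 * n := by
  refine hX.integral_heightProcess_le_of_drift (f := fun n h ↦ (φ h - (φ h₀ + n * θ)) ^ 2)
    (a := 1) (b := K ^ 2) (B := fun n ↦ K ^ 2 * n) zero_le_one (fun n h ↦ ?_) (by simp)
    (fun n ↦ by push_cast; linarith) n
  simpa only [Nat.cast_add_one, add_one_mul, add_assoc, one_mul] using
    expect_sq_deposit_le_of_poisson (hφ h) (hK · h) (φ h₀ + n * θ)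

lemma ae_tendsto_sq_div_of_poisson [Nonempty V] (hX : IsUniformIID μ X)
    {φ : (V → ℕ) → ℝ} {θ K : ℝ} (hφ : ∀ h, 𝔼 v, φ (deposit G v h) = φ h + θ)
    (hK : ∀ v h, |φ (deposit G v h) - φ h| ≤ K) :
    ∀ᵐ ω ∂μ, Tendsto (fun k : ℕ ↦ φ (heightProcess G h₀ (X · ω) (k ^ 2)) / (k : ℝ) ^ 2)
      atTop (𝓝 θ) := by
  let D (n : ℕ) (ω : Ω) : ℝ := φ (heightProcess G h₀ (X · ω) n) - (φ h₀ + n * θ)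
  have hmean (n : ℕ) : ∫ ω, D n ω ^ 2 / n ∂μ ≤ K ^ 2 := by
    rw [integral_div]
    exact div_le_of_le_mul₀ n.cast_nonneg (sq_nonneg K)
      (hX.integral_sq_heightProcess_le_of_poisson hφ hK n)
  have hint (n : ℕ) : Integrable (fun ω ↦ D n ω ^ 2 / n) μ :=
    hX.integrable_heightProcess (fun h ↦ (φ h - (φ h₀ + n * θ)) ^ 2 / n) n
  filter_upwards [ae_tendsto_div_sq_of_integral_le hint (fun n ω ↦ by positivity) hmean] with ω hω
  have hD : Tendsto (fun k : ℕ ↦ D (k ^ 2) ω / (k : ℝ) ^ 2) atTop (𝓝 0) := by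
    have hsq : Tendsto (fun k : ℕ ↦ (D (k ^ 2) ω / (k : ℝ) ^ 2) ^ 2) atTop (𝓝 0) :=
      hω.congr fun k ↦ by rw [Nat.cast_pow, div_div, ← sq, div_pow]
    rw [tendsto_zero_iff_abs_tendsto_zero]
    simpa only [Function.comp_def, Real.sqrt_sq_eq_abs, Real.sqrt_zero] using hsq.sqrt
  have hconst : Tendsto (fun k : ℕ ↦ φ h₀ / (k : ℝ) ^ 2) atTop (𝓝 0) :=
    tendsto_const_nhds.div_atTop
      ((tendsto_pow_atTop two_ne_zero).comp tendsto_natCast_atTop_atTop)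
  have hsum : Tendsto (fun k : ℕ ↦ D (k ^ 2) ω / (k : ℝ) ^ 2 + φ h₀ / (k : ℝ) ^ 2 + θ)
      atTop (𝓝 θ) := by simpa using (hD.add hconst).add_const θ
  refine hsum.congr' ?_
  filter_upwards [eventually_ne_atTop 0] with k hk
  simp only [D, Nat.cast_pow]
  field_simp
  ring

lemma ae_tendsto_heightProcess_div_of_poisson [Nonempty V] (hX : IsUniformIID μ X)
    {φ U : (V → ℕ) → ℝ} {θ K a b : ℝ} (hφ : ∀ h, 𝔼 v, φ (deposit G v h) = φ h + θ)
    (hK : ∀ v h, |φ (deposit G v h) - φ h| ≤ K) (hφU : ∀ h x, |h x - φ h| ≤ U h)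
    (ha₀ : 0 ≤ a) (ha₁ : a < 1) (hU : ∀ h, 𝔼 v, U (deposit G v h) ≤ a * U h + b) :
    ∀ᵐ ω ∂μ, ∀ x, Tendsto (fun n : ℕ ↦ (heightProcess G h₀ (X · ω) n x : ℝ) / n)
      atTop (𝓝 θ) := by
  have hU₀ (h : V → ℕ) : 0 ≤ U h := (abs_nonneg _).trans (hφU h (Classical.arbitrary V))
  have hUmean (n : ℕ) :
      ∫ ω, U (heightProcess G h₀ (X · ω) n) ∂μ ≤ max (U h₀) (b / (1 - a)) := by
    refine hX.integral_heightProcess_le_of_drift (f := fun _ ↦ U)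
      (B := fun _ ↦ max (U h₀) (b / (1 - a))) ha₀ (fun _ ↦ hU) (le_max_left _ _) (fun _ ↦ ?_) n
    have := (div_le_iff₀ (sub_pos.2 ha₁)).1 (le_max_right (U h₀) (b / (1 - a)))
    linarith
  filter_upwards [hX.ae_tendsto_sq_div_of_poisson (h₀ := h₀) hφ hK,
    ae_tendsto_div_sq_of_integral_le (fun n ↦ hX.integrable_heightProcess U n)
      (fun n ω ↦ hU₀ _) hUmean] with ω hφω hUω x
  refine tendsto_div_of_monotone_of_tendsto_div_sq
    (fun m n hmn ↦ Nat.cast_le.2 (monotone_heightProcess _ hmn x)) ?_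
  have hdiff : Tendsto (fun k : ℕ ↦ ((heightProcess G h₀ (X · ω) (k ^ 2) x : ℝ)
      - φ (heightProcess G h₀ (X · ω) (k ^ 2))) / (k : ℝ) ^ 2) atTop (𝓝 0) := by
    refine squeeze_zero_norm (fun k ↦ ?_) hUω
    rw [Real.norm_eq_abs, abs_div, abs_of_nonneg (sq_nonneg (k : ℝ))]
    gcongr
    exact hφU _ x
  simpa [sub_div] using hdiff.add hφω

end IsUniformIID

theorem isGrowthRate_of_poisson [Nonempty V] {φ U : (V → ℕ) → ℝ} {θ K a b : ℝ} (hθ : 0 < θ)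
    (hφ : ∀ h, 𝔼 v, φ (deposit G v h) = φ h + θ) (hK : ∀ v h, |φ (deposit G v h) - φ h| ≤ K)
    (hφU : ∀ h x, |h x - φ h| ≤ U h) (ha₀ : 0 ≤ a) (ha₁ : a < 1)
    (hU : ∀ h, 𝔼 v, U (deposit G v h) ≤ a * U h + b) :
    IsGrowthRate G (Fintype.card V * θ) := by
  refine ⟨by positivity, fun μ _ X hX ↦ ?_⟩
  have hlim := hX.ae_tendsto_heightProcess_div_of_poisson (h₀ := fun _ ↦ 0) hφ hK hφU ha₀ ha₁ hU
  simp only [mul_div_assoc]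
  exact ⟨hlim.mono fun ω hω ↦ (tendsto_iSup_div_of_forall_tendsto_div hω).const_mul _,
    hlim.mono fun ω hω ↦ (tendsto_iInf_div_of_forall_tendsto_div hω).const_mul _⟩

end Deposition

section Star

open scoped goldenRatio

/-- The excess of `x` over the centre of a star, `0` if `x` is not higher than the centre. A leaf
has to beat the centre to matter: depositing on a leaf raises its excess by exactly one. -/
def excess (h : Fin 3 → ℕ) (x : Fin 3) : ℕ := h x - h 0

/-- The maximal height on the star with three vertices. -/
def topHeight (h : Fin 3 → ℕ) : ℕ := h 0 + max (excess h 1) (excess h 2)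

/-- The difference between the excesses of the two leaves of the star with three vertices. -/
def leafGap (h : Fin 3 → ℕ) : ℕ := Nat.dist (excess h 1) (excess h 2)

/-- A weighted total of the depths below the maximal height, the Lyapunov function of the star.
Up to bounded terms, a drop at the centre erases its depth and a drop at a leaf replaces the depth
of that leaf by at most that of the centre, so the centre needs a weight greater than `2`; the
weight `4` gives the contraction factor `5 / 6`. -/
def deficit (h : Fin 3 → ℕ) : ℕ :=
  4 * (topHeight h - h 0) + (topHeight h - h 1) + (topHeight h - h 2)

/-- The solution of the Poisson equation on the star with three vertices: its value grows by
`(2 + 1 / √5) / 3` on average when a block is dropped. -/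
noncomputable def starPotential (h : Fin 3 → ℕ) : ℝ := topHeight h + ψ ^ (2 * leafGap h) / √5

variable (h : Fin 3 → ℕ)

lemma starGraph_adj {n : ℕ} {x y : Fin n} :
    (starGraph n).Adj x y ↔ x ≠ y ∧ ((x : ℕ) = 0 ∨ (y : ℕ) = 0) :=
  SimpleGraph.fromRel_adj _ _ _

lemma deposit_starGraph_self (x : Fin 3) :
    deposit (starGraph 3) x h x = if x = 0 then topHeight h + 1 else h 0 + excess h x + 1 := by
  have huniv : (Finset.univ : Finset (Fin 3)) = {0, 1, 2} := rfl
  obtain rfl | rfl | rfl : x = 0 ∨ x = 1 ∨ x = 2 := by omega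
  all_goals
    simp only [deposit, starGraph_adj, huniv, Finset.sup_insert, Finset.sup_singleton, topHeight,
      excess, Fin.isValue, Fin.reduceEq, ne_eq, Fin.val_zero, Fin.val_one, Fin.val_two, reduceIte,
      OfNat.ofNat_ne_zero, one_ne_zero, not_true_eq_false, not_false_eq_true, true_or, or_true,
      or_false, false_or, and_true, and_false, or_self, and_self]
    omega

lemma deposit_starGraph_center :
    deposit (starGraph 3) 0 h = ![topHeight h + 1, h 1, h 2] := by
  ext x
  fin_cases x <;> simp [deposit_starGraph_self, deposit_of_ne]

lemma deposit_starGraph_one :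
    deposit (starGraph 3) 1 h = ![h 0, h 0 + excess h 1 + 1, h 2] := by
  ext x
  fin_cases x <;> simp [deposit_starGraph_self, deposit_of_ne]

lemma deposit_starGraph_two :
    deposit (starGraph 3) 2 h = ![h 0, h 1, h 0 + excess h 2 + 1] := by
  ext x
  fin_cases x <;> simp [deposit_starGraph_self, deposit_of_ne]

lemma topHeight_deposit_center : topHeight (deposit (starGraph 3) 0 h) = topHeight h + 1 := by
  simp only [deposit_starGraph_center, topHeight, excess, Matrix.cons_val]
  omega

lemma leafGap_deposit_center : leafGap (deposit (starGraph 3) 0 h) = 0 := by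
  simp only [deposit_starGraph_center, leafGap, topHeight, excess, Nat.dist, Matrix.cons_val]
  omega

lemma topHeight_leafGap_deposit_leaf_of_leafGap_eq_zero {h : Fin 3 → ℕ} {x : Fin 3} (hx : x ≠ 0)
    (hgap : leafGap h = 0) :
    topHeight (deposit (starGraph 3) x h) = topHeight h + 1 ∧
      leafGap (deposit (starGraph 3) x h) = 1 := by
  obtain rfl | rfl : x = 1 ∨ x = 2 := by omega
  all_goals
    simp only [deposit_starGraph_one, deposit_starGraph_two, topHeight, leafGap, excess, Nat.dist,
      Matrix.cons_val] at hgap ⊢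
    omega

lemma topHeight_leafGap_deposit_of_excess_lt {h : Fin 3 → ℕ} {x y : Fin 3} (hx : x ≠ 0)
    (hxy : excess h x < excess h y) :
    (topHeight (deposit (starGraph 3) x h) = topHeight h ∧
      leafGap (deposit (starGraph 3) x h) + 1 = leafGap h) ∧
    (topHeight (deposit (starGraph 3) y h) = topHeight h + 1 ∧
      leafGap (deposit (starGraph 3) y h) = leafGap h + 1) := by
  have hy : y ≠ 0 := by rintro rfl; simp [excess] at hxy
  have hne : x ≠ y := ne_of_apply_ne _ hxy.ne
  obtain ⟨rfl, rfl⟩ | ⟨rfl, rfl⟩ : x = 1 ∧ y = 2 ∨ x = 2 ∧ y = 1 := by omega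
  all_goals
    simp only [deposit_starGraph_one, deposit_starGraph_two, topHeight, leafGap, excess, Nat.dist,
      Matrix.cons_val] at hxy ⊢
    omega

lemma expect_deposit_starGraph (f : (Fin 3 → ℕ) → ℝ) :
    𝔼 v, f (deposit (starGraph 3) v h) = (f (deposit (starGraph 3) 0 h) +
      f (deposit (starGraph 3) 1 h) + f (deposit (starGraph 3) 2 h)) / 3 := by
  simp [Fintype.expect_eq_sum_div_card, Fin.sum_univ_three]

lemma goldenConj_pow_recurrence (d : ℕ) :
    ψ ^ (2 * d) + ψ ^ (2 * (d + 2)) = 3 * ψ ^ (2 * (d + 1)) := by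
  linear_combination (ψ ^ (2 * d) * (ψ ^ 2 + ψ - 1)) * Real.goldenConj_sq

lemma starPotential_deposit_center :
    starPotential (deposit (starGraph 3) 0 h) = topHeight h + 1 + 1 / √5 := by
  simp [starPotential, topHeight_deposit_center, leafGap_deposit_center]

lemma starPotential_deposit_leaf_of_leafGap_eq_zero {h : Fin 3 → ℕ} {x : Fin 3} (hx : x ≠ 0)
    (hgap : leafGap h = 0) :
    starPotential (deposit (starGraph 3) x h) = topHeight h + 1 + ψ ^ 2 / √5 := by
  obtain ⟨htop, hgap'⟩ := topHeight_leafGap_deposit_leaf_of_leafGap_eq_zero hx hgap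
  simp [starPotential, htop, hgap']

lemma starPotential_deposit_add_of_excess_lt {h : Fin 3 → ℕ} {x y : Fin 3} (hx : x ≠ 0)
    (hxy : excess h x < excess h y) :
    starPotential (deposit (starGraph 3) x h) + starPotential (deposit (starGraph 3) y h) =
      2 * topHeight h + 1 + 3 * (ψ ^ (2 * leafGap h) / √5) := by
  obtain ⟨⟨htopx, hgapx⟩, htopy, hgapy⟩ := topHeight_leafGap_deposit_of_excess_lt hx hxy
  simp only [starPotential, htopx, htopy, hgapy, ← hgapx]
  push_cast
  linear_combination goldenConj_pow_recurrence (leafGap (deposit (starGraph 3) x h)) / √5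

lemma expect_starPotential_deposit :
    𝔼 v, starPotential (deposit (starGraph 3) v h) = starPotential h + (2 + 1 / √5) / 3 := by
  have hpot : starPotential h = topHeight h + ψ ^ (2 * leafGap h) / √5 := rfl
  rw [expect_deposit_starGraph, starPotential_deposit_center, hpot]
  rcases lt_trichotomy (excess h 1) (excess h 2) with hlt | heq | hgt
  · have hleaves := starPotential_deposit_add_of_excess_lt one_ne_zero hlt
    linarith
  · have hgap : leafGap h = 0 := by rw [leafGap, heq, Nat.dist_self]
    have hboundary : (3 - 2 * ψ ^ 2) / √5 = 1 := by
      rw [div_eq_one_iff_eq (by positivity), Real.goldenConj_sq, Real.goldenConj]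
      ring
    rw [starPotential_deposit_leaf_of_leafGap_eq_zero one_ne_zero hgap,
      starPotential_deposit_leaf_of_leafGap_eq_zero (by decide) hgap, hgap]
    linear_combination -hboundary / 3
  · have hleaves := starPotential_deposit_add_of_excess_lt (by decide) hgt
    linarith

lemma goldenConj_pow_div_sqrt_five_mem_Icc (d : ℕ) :
    ψ ^ (2 * d) / √5 ∈ Set.Icc (0 : ℝ) 1 := by
  have hψ : ψ ^ 2 ≤ 1 := by
    rw [sq_le_one_iff_abs_le_one, abs_le]
    exact ⟨Real.neg_one_lt_goldenConj.le, Real.goldenConj_neg.le.trans zero_le_one⟩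
  rw [pow_mul]
  refine ⟨by positivity, div_le_one_of_le₀ ?_ (Real.sqrt_nonneg 5)⟩
  exact (pow_le_one₀ (sq_nonneg ψ) hψ).trans (Real.one_le_sqrt.2 (by norm_num))

lemma topHeight_deposit_mem_Icc (v : Fin 3) :
    topHeight (deposit (starGraph 3) v h) ∈ Set.Icc (topHeight h) (topHeight h + 1) := by
  obtain rfl | rfl | rfl : v = 0 ∨ v = 1 ∨ v = 2 := by omega
  all_goals
    simp only [deposit_starGraph_center, deposit_starGraph_one, deposit_starGraph_two, topHeight,
      excess, Matrix.cons_val, Set.mem_Icc]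
    omega

lemma abs_starPotential_deposit_sub_le (v : Fin 3) :
    |starPotential (deposit (starGraph 3) v h) - starPotential h| ≤ 2 := by
  obtain ⟨hlow, hhigh⟩ := topHeight_deposit_mem_Icc h v
  obtain ⟨hnew₀, hnew₁⟩ :=
    goldenConj_pow_div_sqrt_five_mem_Icc (leafGap (deposit (starGraph 3) v h))
  obtain ⟨hold₀, hold₁⟩ := goldenConj_pow_div_sqrt_five_mem_Icc (leafGap h)
  rify at hlow hhigh
  rw [abs_le, starPotential, starPotential]
  constructor <;> linarith

lemma le_topHeight (x : Fin 3) : h x ≤ topHeight h := by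
  obtain rfl | rfl | rfl : x = 0 ∨ x = 1 ∨ x = 2 := by omega
  all_goals simp only [topHeight, excess]; omega

lemma topHeight_le_add_deficit (x : Fin 3) : topHeight h ≤ h x + deficit h := by
  obtain rfl | rfl | rfl : x = 0 ∨ x = 1 ∨ x = 2 := by omega
  all_goals rw [deficit]; omega

lemma abs_sub_starPotential_le (x : Fin 3) : |h x - starPotential h| ≤ deficit h + 1 := by
  obtain ⟨hcorr₀, hcorr₁⟩ := goldenConj_pow_div_sqrt_five_mem_Icc (leafGap h)
  have hle := le_topHeight h x
  have hge := topHeight_le_add_deficit h x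
  rify at hle hge
  rw [abs_le, starPotential]
  constructor <;> linarith

lemma two_mul_sum_deficit_deposit_le :
    2 * (deficit (deposit (starGraph 3) 0 h) + deficit (deposit (starGraph 3) 1 h) +
      deficit (deposit (starGraph 3) 2 h)) ≤ 5 * deficit h + 24 := by
  simp only [deposit_starGraph_center, deposit_starGraph_one, deposit_starGraph_two, deficit,
    topHeight, excess, Matrix.cons_val]
  omega

lemma expect_deficit_deposit_add_one_le :
    𝔼 v, (deficit (deposit (starGraph 3) v h) + 1 : ℝ) ≤ 5 / 6 * (deficit h + 1) + 25 / 6 := by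
  rw [expect_deposit_starGraph h fun h ↦ (deficit h + 1 : ℝ)]
  have hdrift := two_mul_sum_deficit_deposit_le h
  rify at hdrift
  linarith

end Star

theorem stmt2 : IsGrowthRate (starGraph 3) (2 + 1 / Real.sqrt 5) := by
  have hgrowth : IsGrowthRate (starGraph 3) (Fintype.card (Fin 3) * ((2 + 1 / √5) / 3)) :=
    isGrowthRate_of_poisson (by positivity) expect_starPotential_deposit
      (fun v h ↦ abs_starPotential_deposit_sub_le h v) abs_sub_starPotential_le (by norm_num)
      (by norm_num) expect_deficit_deposit_add_one_le
  convert hgrowth using 1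
  rw [Fintype.card_fin]
  push_cast
  ring
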